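/- Define f(t) = cos(π cos t)·(9 cos²t - 4 cos²(2t)) + 12 sin(π cos t)·cos(2t)·cos t. Then f(t) < -π²/4 for all t ∈ ℝ. -/

import Mathlib

open Real

/-- `f(t) = cos(π cos t)(9 cos²t - 4 cos²(2t)) + 12 sin(π cos t) cos(2t) cos t`. -/
noncomputable def fPet (t : ℝ) : ℝ :=
  Real.cos (Real.pi * Real.cos t) *
      (9 * Real.cos t ^ 2 - 4 * Real.cos (2 * t) ^ 2) +
    12 * Real.sin (Real.pi * Real.cos t) * Real.cos (2 * t) * Real.cos t

theorem nonneg_of_deriv_aux (g g' : ℝ → ℝ) (hg : ∀ x, HasDerivAt g (g' x) x)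
    (h0 : g 0 = 0) (hp : ∀ x, 0 ≤ x → 0 ≤ g' x) : ∀ x, 0 ≤ x → 0 ≤ g x := by
  intro x hx
  have hm : MonotoneOn g (Set.Ici 0) := by
    apply monotoneOn_of_deriv_nonneg (convex_Ici 0)
    · exact fun y _ => (hg y).continuousAt.continuousWithinAt
    · exact fun y _ => (hg y).differentiableAt.differentiableWithinAt
    · intro y hy
      rw [interior_Ici] at hy
      rw [(hg y).deriv]
      exact hp y (le_of_lt hy)
  have := hm (Set.mem_Ici.2 le_rfl) (Set.mem_Ici.2 hx) hx
  linarith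

theorem hasDerivAt_mono_aux (n : ℕ) (k x : ℝ) :
    HasDerivAt (fun x : ℝ => x ^ (n + 1) / k) ((n + 1 : ℝ) * x ^ n / k) x := by
  simpa using (hasDerivAt_pow (n + 1) x).div_const k

theorem cos4_aux : ∀ x : ℝ, 0 ≤ x → 0 ≤ 1 - x ^ 2 / 2 + x ^ 4 / 24 - Real.cos x := by
  apply nonneg_of_deriv_aux _ (fun x => Real.sin x - (x - x ^ 3 / 6))
  · intro x
    refine HasDerivAt.congr_deriv (((((hasDerivAt_const x (1 : ℝ)).sub (hasDerivAt_mono_aux 1 2 x)).add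
      (hasDerivAt_mono_aux 3 24 x)).sub (Real.hasDerivAt_cos x))) ?_
    push_cast; ring
  · simp
  · intro x hx
    linarith [Real.sin_ge_sub_cube hx]

theorem sin5_aux : ∀ x : ℝ, 0 ≤ x → 0 ≤ x - x ^ 3 / 6 + x ^ 5 / 120 - Real.sin x := by
  apply nonneg_of_deriv_aux _ (fun x => 1 - x ^ 2 / 2 + x ^ 4 / 24 - Real.cos x)
  · intro x
    refine HasDerivAt.congr_deriv (((((hasDerivAt_id x).sub (hasDerivAt_mono_aux 2 6 x)).add
      (hasDerivAt_mono_aux 4 120 x)).sub (Real.hasDerivAt_sin x))) ?_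
    push_cast; ring
  · simp
  · exact cos4_aux

theorem cos6_aux : ∀ x : ℝ, 0 ≤ x →
    0 ≤ Real.cos x - (1 - x ^ 2 / 2 + x ^ 4 / 24 - x ^ 6 / 720) := by
  apply nonneg_of_deriv_aux _ (fun x => x - x ^ 3 / 6 + x ^ 5 / 120 - Real.sin x)
  · intro x
    refine HasDerivAt.congr_deriv ((Real.hasDerivAt_cos x).sub
      ((((hasDerivAt_const x (1 : ℝ)).sub (hasDerivAt_mono_aux 1 2 x)).add
      (hasDerivAt_mono_aux 3 24 x)).sub (hasDerivAt_mono_aux 5 720 x))) ?_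
    push_cast; ring
  · simp
  · exact sin5_aux

theorem sin7_aux : ∀ x : ℝ, 0 ≤ x →
    0 ≤ Real.sin x - (x - x ^ 3 / 6 + x ^ 5 / 120 - x ^ 7 / 5040) := by
  apply nonneg_of_deriv_aux _
    (fun x => Real.cos x - (1 - x ^ 2 / 2 + x ^ 4 / 24 - x ^ 6 / 720))
  · intro x
    refine HasDerivAt.congr_deriv ((Real.hasDerivAt_sin x).sub
      ((((hasDerivAt_id x).sub (hasDerivAt_mono_aux 2 6 x)).add
      (hasDerivAt_mono_aux 4 120 x)).sub (hasDerivAt_mono_aux 6 5040 x))) ?_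
    push_cast; ring
  · simp
  · exact cos6_aux

theorem cos8_aux : ∀ x : ℝ, 0 ≤ x →
    0 ≤ 1 - x ^ 2 / 2 + x ^ 4 / 24 - x ^ 6 / 720 + x ^ 8 / 40320 - Real.cos x := by
  apply nonneg_of_deriv_aux _
    (fun x => Real.sin x - (x - x ^ 3 / 6 + x ^ 5 / 120 - x ^ 7 / 5040))
  · intro x
    refine HasDerivAt.congr_deriv ((((((hasDerivAt_const x (1 : ℝ)).sub (hasDerivAt_mono_aux 1 2 x)).add
      (hasDerivAt_mono_aux 3 24 x)).sub (hasDerivAt_mono_aux 5 720 x)).add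
      (hasDerivAt_mono_aux 7 40320 x)).sub (Real.hasDerivAt_cos x)) ?_
    push_cast; ring
  · simp
  · exact sin7_aux

theorem sin_approx_aux (x : ℝ) (hx : |x| ≤ 1.571) :
    |Real.sin x - (x - x ^ 3 / 6 + x ^ 5 / 120)| ≤ 0.0048 := by
  have key : ∀ y : ℝ, 0 ≤ y → y ≤ 1.571 →
      |Real.sin y - (y - y ^ 3 / 6 + y ^ 5 / 120)| ≤ 0.0048 := by
    intro y h0 h1
    have h2 : y ^ 7 ≤ 1.571 ^ 7 := pow_le_pow_left₀ h0 h1 7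
    have h3 := sin5_aux y h0
    have h4 := sin7_aux y h0
    norm_num at h2 ⊢
    rw [abs_le]
    constructor <;> linarith
  rcases le_total 0 x with h | h
  · exact key x h (by rwa [abs_of_nonneg h] at hx)
  · have := key (-x) (by linarith) (by rwa [abs_of_nonpos h] at hx)
    rw [← abs_neg]
    convert this using 2
    rw [Real.sin_neg]; ring

theorem cos_approx_aux (x : ℝ) (hx : |x| ≤ 1.571) :
    |Real.cos x - (1 - x ^ 2 / 2 + x ^ 4 / 24 - x ^ 6 / 720)| ≤ 0.001 := by
  have key : ∀ y : ℝ, 0 ≤ y → y ≤ 1.571 →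
      |Real.cos y - (1 - y ^ 2 / 2 + y ^ 4 / 24 - y ^ 6 / 720)| ≤ 0.001 := by
    intro y h0 h1
    have h2 : y ^ 8 ≤ 1.571 ^ 8 := pow_le_pow_left₀ h0 h1 8
    have h3 := cos6_aux y h0
    have h4 := cos8_aux y h0
    norm_num at h2 ⊢
    rw [abs_le]
    constructor <;> linarith
  rcases le_total 0 x with h | h
  · exact key x h (by rwa [abs_of_nonneg h] at hx)
  · have := key (-x) (by linarith) (by rwa [abs_of_nonpos h] at hx)
    convert this using 2
    rw [Real.cos_neg]; ring

theorem sin_lip_aux (a b : ℝ) : |Real.sin a - Real.sin b| ≤ |a - b| := by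
  rw [Real.sin_sub_sin, abs_mul, abs_mul]
  have h1 := Real.abs_sin_le_abs (x := (a - b) / 2)
  have h2 := Real.abs_cos_le_one ((a + b) / 2)
  have h3 : |(a - b) / 2| = |a - b| / 2 := by rw [abs_div]; norm_num
  have h4 : |(2 : ℝ)| = 2 := by norm_num
  rw [h4]
  nlinarith [abs_nonneg (Real.sin ((a - b) / 2)), abs_nonneg (Real.cos ((a + b) / 2))]

theorem poly_aux (c : ℝ) (h0 : 0 ≤ c) (h1 : c ≤ 1) (u : ℝ) (hu : u = 3.1416 * (c - 1 / 2)) :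
    -(u - u ^ 3 / 6 + u ^ 5 / 120) * (9 * c ^ 2 - 4 * (2 * c ^ 2 - 1) ^ 2)
      + 12 * (1 - u ^ 2 / 2 + u ^ 4 / 24 - u ^ 6 / 720) * ((2 * c ^ 2 - 1) * c) < -2.515 := by
  subst hu
  have key : ∀ s r : ℝ, 0 ≤ s → 0 ≤ r → ∀ i j : ℕ, 0 ≤ s ^ i * r ^ j := by
    intro s r hs hr i j
    positivity
  rcases le_total c 0.7 with h | h
  · have k := key c (0.7 - c) h0 (by linarith)
    linarith [k 0 9, k 1 8, k 2 7, k 3 6, k 4 5, k 5 4, k 6 3, k 7 2, k 8 1, k 9 0]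
  · have k := key (c - 0.7) (1 - c) (by linarith) (by linarith)
    linarith [k 0 9, k 1 8, k 2 7, k 3 6, k 4 5, k 5 4, k 6 3, k 7 2, k 8 1, k 9 0]

theorem main_aux (c : ℝ) (h0 : 0 ≤ c) (h1 : c ≤ 1) :
    Real.cos (Real.pi * c) * (9 * c ^ 2 - 4 * (2 * c ^ 2 - 1) ^ 2)
      + 12 * Real.sin (Real.pi * c) * (2 * c ^ 2 - 1) * c < -(Real.pi ^ 2 / 4) := by
  have p1 := Real.pi_gt_d4
  have p2 := Real.pi_lt_d4
  have ec : Real.cos (Real.pi * c) = -Real.sin (Real.pi * (c - 1 / 2)) := by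
    rw [← Real.cos_add_pi_div_two]; congr 1; ring
  have es : Real.sin (Real.pi * c) = Real.cos (Real.pi * (c - 1 / 2)) := by
    rw [← Real.sin_add_pi_div_two]; congr 1; ring
  have hP := poly_aux c h0 h1 _ rfl
  have hab : |3.1416 * (c - 1 / 2)| ≤ 1.571 := by
    rw [abs_le]; constructor <;> linarith
  have hS := sin_approx_aux _ hab
  have hC := cos_approx_aux _ hab
  have hd : |Real.pi * (c - 1 / 2) - 3.1416 * (c - 1 / 2)| ≤ 0.0001 := by
    rw [abs_le]; constructor <;> nlinarith
  have hS2 := (sin_lip_aux (Real.pi * (c - 1 / 2)) (3.1416 * (c - 1 / 2))).trans hd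
  have hC2 : |Real.cos (Real.pi * (c - 1 / 2)) - Real.cos (3.1416 * (c - 1 / 2))| ≤ 0.0001 := by
    rw [← Real.sin_add_pi_div_two, ← Real.sin_add_pi_div_two]
    refine (sin_lip_aux _ _).trans ?_
    rwa [add_sub_add_right_eq_sub]
  rw [ec, es]
  generalize Real.sin (Real.pi * (c - 1 / 2)) = S at *
  generalize Real.cos (Real.pi * (c - 1 / 2)) = C at *
  generalize 3.1416 * (c - 1 / 2) = u at *
  generalize u - u ^ 3 / 6 + u ^ 5 / 120 = S5 at *
  generalize 1 - u ^ 2 / 2 + u ^ 4 / 24 - u ^ 6 / 720 = C6 at *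
  have hA : |9 * c ^ 2 - 4 * (2 * c ^ 2 - 1) ^ 2| ≤ 6 := by
    rw [abs_le]; constructor <;> nlinarith [sq_nonneg (c ^ 2 - 25 / 32), mul_nonneg h0 h0, mul_nonneg (mul_nonneg h0 h0) (sub_nonneg.2 (show c ^ 2 ≤ 1 by nlinarith))]
  have hB : |(2 * c ^ 2 - 1) * c| ≤ 1 := by
    rw [abs_mul, abs_of_nonneg h0]
    have : |2 * c ^ 2 - 1| ≤ 1 := by rw [abs_le]; constructor <;> nlinarith
    nlinarith [abs_nonneg (2 * c ^ 2 - 1)]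
  have e1 : |S - S5| ≤ 0.005 := by
    rw [abs_le] at *; constructor <;> linarith
  have e2 : |C - C6| ≤ 0.0011 := by
    rw [abs_le] at *; constructor <;> linarith
  have m1 : |(S - S5) * (9 * c ^ 2 - 4 * (2 * c ^ 2 - 1) ^ 2)| ≤ 0.005 * 6 := by
    rw [abs_mul]; exact mul_le_mul e1 hA (abs_nonneg _) (by norm_num)
  have m2 : |(C - C6) * ((2 * c ^ 2 - 1) * c)| ≤ 0.0011 * 1 := by
    rw [abs_mul]; exact mul_le_mul e2 hB (abs_nonneg _) (by norm_num)
  have hpi : Real.pi ^ 2 / 4 ≤ 2.468 := by nlinarith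
  have n1 := (abs_le.1 m1).1
  have n2 := (abs_le.1 m2).2
  generalize 9 * c ^ 2 - 4 * (2 * c ^ 2 - 1) ^ 2 = A at *
  have e3 : 12 * C * (2 * c ^ 2 - 1) * c = 12 * C * ((2 * c ^ 2 - 1) * c) := by ring
  rw [e3]
  generalize (2 * c ^ 2 - 1) * c = B at *
  linarith

theorem fPet_lt_neg_pi_sq_div_four : ∀ t : ℝ, fPet t < -(Real.pi ^ 2 / 4) := by
  intro t
  unfold fPet
  rw [Real.cos_two_mul]
  rcases le_total 0 (Real.cos t) with h | h
  · exact main_aux _ h (Real.cos_le_one t)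
  · have := main_aux (-Real.cos t) (by linarith) (by linarith [Real.neg_one_le_cos t])
    rw [mul_neg, Real.cos_neg, Real.sin_neg] at this
    simpa using this
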